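/- arXiv:2602.02381 — 2 statements merged into one kernel-verified Lean document; each statement's English description precedes it below -/
import Mathlib

section
/- Let U ⊆ ℝ^d be a nonempty open connected set, let F be a real inner product space, and let h : ℝ^d → F be differentiable on U with ‖h(z)‖ = 1 for every z ∈ U. Suppose there is a single linear subspace W ⊆ F such that the range of the Fréchet derivative Dh(z) equals W for every z ∈ U. Then W = {0}; consequently Dh(z) = 0 for all z ∈ U. -/
/-- Let `U ⊆ ℝ^d` be a nonempty open connected set and `h : ℝ^d → F` differentiable on
`U` with `‖h z‖ = 1` on `U` (`F` a real inner product space). If there is a single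
subspace `W ⊆ F` such that the range of `Dh(z)` equals `W` for every `z ∈ U`, then
`W = ⊥` and hence `Dh(z) = 0` on `U`. -/
theorem range_fderiv_constant_of_sphere_valued_eq_bot
    {d : ℕ} {F : Type*} [NormedAddCommGroup F] [InnerProductSpace ℝ F]
    {U : Set (EuclideanSpace ℝ (Fin d))} (hUne : U.Nonempty) (hUopen : IsOpen U)
    (hUconn : IsConnected U)
    (h : EuclideanSpace ℝ (Fin d) → F)
    (hdiff : ∀ z ∈ U, DifferentiableAt ℝ h z)
    (hnorm : ∀ z ∈ U, ‖h z‖ = 1)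
    (W : Submodule ℝ F)
    (hrange : ∀ z ∈ U, LinearMap.range (fderiv ℝ h z : EuclideanSpace ℝ (Fin d) →ₗ[ℝ] F) = W) :
    W = ⊥ ∧ ∀ z ∈ U, fderiv ℝ h z = 0 := by
  have key : ∀ z ∈ U, ∀ w ∈ W, inner ℝ (h z) w = 0 := by
    intro z hz w hw
    rw [← hrange z hz] at hw
    obtain ⟨v, rfl⟩ := hw
    have h1 := (hdiff z hz).hasFDerivAt.inner ℝ (hdiff z hz).hasFDerivAt
    have h2 : (fun y => inner ℝ (h y) (h y)) =ᶠ[nhds z] fun _ => (1 : ℝ) := by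
      filter_upwards [hUopen.mem_nhds hz] with y hy
      rw [real_inner_self_eq_norm_sq, hnorm y hy]
      norm_num
    have h3 := h1.unique ((hasFDerivAt_const (1 : ℝ) z).congr_of_eventuallyEq h2)
    have h4 := congrArg (fun L => L v) h3
    simp [fderivInnerCLM_apply, real_inner_comm] at h4
    simpa [real_inner_comm] using h4
  have hW : W = ⊥ := by
    rw [Submodule.eq_bot_iff]
    intro w hw
    obtain ⟨z, hz⟩ := hUne
    have hw' := hw
    rw [← hrange z hz] at hw'
    obtain ⟨v, hv⟩ := hw'
    have h1 := (hdiff z hz).hasFDerivAt.inner ℝ (hasFDerivAt_const w z)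
    have h2 : (fun y => inner ℝ (h y) w) =ᶠ[nhds z] fun _ => (0 : ℝ) := by
      filter_upwards [hUopen.mem_nhds hz] with y hy
      exact key y hy w hw
    have h3 := h1.unique ((hasFDerivAt_const (0 : ℝ) z).congr_of_eventuallyEq h2)
    have h4 := congrArg (fun L => L v) h3
    have hv' : fderiv ℝ h z v = w := hv
    simpa [fderivInnerCLM_apply, hv'] using h4
  refine ⟨hW, fun z hz => ?_⟩
  ext1 v
  have h1 : fderiv ℝ h z v ∈ W := by
    rw [← hrange z hz]
    exact ⟨v, rfl⟩
  rw [hW] at h1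
  simpa using h1
end

section
/- (Deterministic core of Proposition 1.) Let d ≥ 1, let U ⊆ EuclideanSpace ℝ (Fin d) be a nonempty open connected set, and let h : EuclideanSpace ℝ (Fin d) → EuclideanSpace ℝ (Fin (k+1)) be differentiable on U with ‖h(z)‖ = 1 for all z ∈ U and rank Dh(z) = d for all z ∈ U. Let S be a self-adjoint positive definite linear operator on EuclideanSpace ℝ (Fin d). Then there is no continuous linear map C : EuclideanSpace ℝ (Fin (k+1)) → EuclideanSpace ℝ (Fin (k+1)) such that Dh(z) ∘ S ∘ Dh(z)* = C for every z ∈ U, where Dh(z)* denotes the adjoint of the derivative. -/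
open scoped RealInnerProductSpace

/-- Deterministic core of Proposition 1: if `h` maps a nonempty open connected
`U ⊆ ℝ^d` into the unit sphere of `ℝ^{k+1}` with full-rank derivative (`rank Dh(z) = d`)
on `U`, and `S` is a self-adjoint positive definite operator on `ℝ^d`, then there is no
single continuous linear map `C` with `Dh(z) ∘ S ∘ Dh(z)* = C` for all `z ∈ U`. -/
theorem no_constant_pushforward_covariance
    {d k : ℕ} (hd : 1 ≤ d)
    {U : Set (EuclideanSpace ℝ (Fin d))} (hUne : U.Nonempty) (hUopen : IsOpen U)
    (hUconn : IsConnected U)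
    (h : EuclideanSpace ℝ (Fin d) → EuclideanSpace ℝ (Fin (k + 1)))
    (hdiff : ∀ z ∈ U, DifferentiableAt ℝ h z)
    (hnorm : ∀ z ∈ U, ‖h z‖ = 1)
    (hrank : ∀ z ∈ U,
      Module.finrank ℝ
        (LinearMap.range
          (fderiv ℝ h z : EuclideanSpace ℝ (Fin d) →ₗ[ℝ] EuclideanSpace ℝ (Fin (k + 1)))) = d)
    (S : EuclideanSpace ℝ (Fin d) →L[ℝ] EuclideanSpace ℝ (Fin d))
    (hSself : ∀ x y : EuclideanSpace ℝ (Fin d), ⟪S x, y⟫ = ⟪x, S y⟫)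
    (hSpos : ∀ x : EuclideanSpace ℝ (Fin d), x ≠ 0 → 0 < ⟪S x, x⟫) :
    ¬ ∃ C : EuclideanSpace ℝ (Fin (k + 1)) →L[ℝ] EuclideanSpace ℝ (Fin (k + 1)),
      ∀ z ∈ U,
        (fderiv ℝ h z).comp (S.comp (ContinuousLinearMap.adjoint (fderiv ℝ h z))) = C := by
  rintro ⟨C, hC⟩
  have hCh : ∀ z ∈ U, C (h z) = 0 := by
    intro z hz
    have horth : ∀ v, ⟪h z, fderiv ℝ h z v⟫ = 0 := by
      intro v
      have h1 : HasFDerivAt (fun w => ‖h w‖ ^ 2) _ z := (hdiff z hz).hasFDerivAt.norm_sq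
      have h2 : HasFDerivAt (fun w => ‖h w‖ ^ 2)
          (0 : EuclideanSpace ℝ (Fin d) →L[ℝ] ℝ) z := by
        refine (hasFDerivAt_const (1 : ℝ) z).congr_of_eventuallyEq ?_
        filter_upwards [hUopen.mem_nhds hz] with w hw
        simp [hnorm w hw]
      have h3 := congrArg (fun L => L v) (h1.unique h2)
      simpa using h3
    have hadj : ContinuousLinearMap.adjoint (fderiv ℝ h z) (h z) = 0 := by
      refine ext_inner_right ℝ fun v => ?_
      rw [ContinuousLinearMap.adjoint_inner_left, horth, inner_zero_left]
    rw [← hC z hz]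
    simp [hadj]
  obtain ⟨z, hz⟩ := hUne
  have hCD : ∀ v, C (fderiv ℝ h z v) = 0 := by
    intro v
    have h1 := C.hasFDerivAt.comp z (hdiff z hz).hasFDerivAt
    have h2 : HasFDerivAt (C ∘ h)
        (0 : EuclideanSpace ℝ (Fin d) →L[ℝ] EuclideanSpace ℝ (Fin (k + 1))) z := by
      refine (hasFDerivAt_const (0 : EuclideanSpace ℝ (Fin (k + 1))) z).congr_of_eventuallyEq ?_
      filter_upwards [hUopen.mem_nhds hz] with w hw
      simp [hCh w hw]
    have h3 := congrArg (fun L => L v) (h1.unique h2)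
    simpa using h3
  have hD : fderiv ℝ h z = 0 := by
    ext1 v
    have h1 := hCD v
    rw [← hC z hz] at h1
    have h2 : ContinuousLinearMap.adjoint (fderiv ℝ h z) (fderiv ℝ h z v) = 0 := by
      by_contra hne
      have h3 := hSpos _ hne
      rw [ContinuousLinearMap.adjoint_inner_right] at h3
      simp only [ContinuousLinearMap.comp_apply] at h1
      rw [h1, inner_zero_left] at h3
      exact lt_irrefl _ h3
    have h4 : ⟪fderiv ℝ h z v, fderiv ℝ h z v⟫ = 0 := by
      rw [← ContinuousLinearMap.adjoint_inner_left, h2, inner_zero_left]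
    simpa using h4
  have hr := hrank z hz
  have hb : LinearMap.range
      (fderiv ℝ h z : EuclideanSpace ℝ (Fin d) →ₗ[ℝ] EuclideanSpace ℝ (Fin (k + 1))) = ⊥ := by
    rw [hD]
    exact LinearMap.range_zero
  rw [hb, finrank_bot] at hr
  omega
end
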